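/- Let Φ(c,x) = φ1(x) + φ2(x)c + φ3(x)c² + φ4(x)c³ + φ5(x)c⁴ + φ6(x)c⁵ + φ7(x)c⁶, where φ1(x) = -256x² + 320x³ - 64x⁴, φ2(x) = 32x + 64x² - 32x³ - 64x⁴, φ3(x) = -160 + 48x + 276x² - 272x³ + 48x⁴, φ4(x) = 16 + 32x - 48x² - 32x³ + 32x⁴, φ5(x) = 20 + 14x - 82x² + 76x³ - 12x⁴, φ6(x) = -4 - 10x + 8x² + 10x³ - 4x⁴, φ7(x) = 5/4 - (13/2)x + (29/4)x² - 7x³ + x⁴. Then Φ(c,x) < 0 for all real c, x with 0 ≤ c ≤ 87137/250000 and 1/4 ≤ x < 1. -/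

import Mathlib

/-!
In degrees `0` and `1` in `c`, the polynomial `Φ(c, x)` has the common factor `32 x (1 - x)`, with
cofactor `-(2 x (4 - x) - (1 + x) (1 + 2 x) c)`. At `c = 1` the expression in parentheses equals
`(4 x - 1) (1 - x)`, so for `1/4 ≤ x ≤ 1` and `c ≤ 1` these two terms contribute a nonpositive
amount. The remaining terms are `c² Ψ(c, x)`, and on `|c| ≤ 1`, `0 ≤ x ≤ 1` the constant
coefficient of `Ψ` in `c`, which is at most `-58`, outweighs the other four, whose absolute values
are at most `22`, `23`, `8` and `4`.
-/

theorem mul_pow_le_of_abs_le {R : Type*} [Ring R] [LinearOrder R] [IsOrderedRing R] {a M c : R}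
    (ha : |a| ≤ M) (hc : |c| ≤ 1) (n : ℕ) : a * c ^ n ≤ M :=
  calc
    a * c ^ n ≤ |a| * |c| ^ n := by simpa only [abs_mul, abs_pow] using le_abs_self (a * c ^ n)
    _ ≤ |a| := mul_le_of_le_one_right (abs_nonneg a) (pow_le_one₀ (abs_nonneg c) hc)
    _ ≤ M := ha

section

variable {K : Type*} [Field K]

/-- The polynomial `Φ(c, x)`, over an arbitrary field. -/
def Phi (c x : K) : K :=
  (-256 * x ^ 2 + 320 * x ^ 3 - 64 * x ^ 4) +
    (32 * x + 64 * x ^ 2 - 32 * x ^ 3 - 64 * x ^ 4) * c +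
    (-160 + 48 * x + 276 * x ^ 2 - 272 * x ^ 3 + 48 * x ^ 4) * c ^ 2 +
    (16 + 32 * x - 48 * x ^ 2 - 32 * x ^ 3 + 32 * x ^ 4) * c ^ 3 +
    (20 + 14 * x - 82 * x ^ 2 + 76 * x ^ 3 - 12 * x ^ 4) * c ^ 4 +
    (-4 - 10 * x + 8 * x ^ 2 + 10 * x ^ 3 - 4 * x ^ 4) * c ^ 5 +
    (5 / 4 - (13 / 2) * x + (29 / 4) * x ^ 2 - 7 * x ^ 3 + x ^ 4) * c ^ 6

/-- The sum of the terms of `Φ(c, x)` of degree at least `2` in `c`, divided by `c²`. -/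
def Psi (c x : K) : K :=
  (-160 + 48 * x + 276 * x ^ 2 - 272 * x ^ 3 + 48 * x ^ 4) +
    (16 + 32 * x - 48 * x ^ 2 - 32 * x ^ 3 + 32 * x ^ 4) * c +
    (20 + 14 * x - 82 * x ^ 2 + 76 * x ^ 3 - 12 * x ^ 4) * c ^ 2 +
    (-4 - 10 * x + 8 * x ^ 2 + 10 * x ^ 3 - 4 * x ^ 4) * c ^ 3 +
    (5 / 4 - (13 / 2) * x + (29 / 4) * x ^ 2 - 7 * x ^ 3 + x ^ 4) * c ^ 4

theorem Phi_eq_add_sq_mul_Psi (c x : K) :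
    Phi c x =
      -(32 * x * (1 - x) * ((4 * x - 1) * (1 - x) + (1 + x) * (1 + 2 * x) * (1 - c))) +
        c ^ 2 * Psi c x := by
  unfold Phi Psi
  ring

variable [LinearOrder K] [IsStrictOrderedRing K] {c x : K}

theorem Psi_coeff_zero_le (hx0 : 0 ≤ x) (hx1 : x ≤ 1) :
    -160 + 48 * x + 276 * x ^ 2 - 272 * x ^ 3 + 48 * x ^ 4 ≤ -58 := by
  have : 0 ≤ 1 - x := sub_nonneg.2 hx1
  have gap_nonneg :
      0 ≤ 2 * (6 * x - 5) ^ 2 + (1 - x) ^ 2 * (52 + 80 * x + 48 * x * (1 + (1 - x))) := by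
    positivity
  linarith

theorem abs_Psi_coeff_one_le (hx0 : 0 ≤ x) (hx1 : x ≤ 1) :
    |16 + 32 * x - 48 * x ^ 2 - 32 * x ^ 3 + 32 * x ^ 4| ≤ 22 := by
  have : 0 ≤ 1 - x := sub_nonneg.2 hx1
  calc
    _ = |4 * (2 * ((1 - x) * (1 + x))) * (2 * (1 + 2 * x * (1 - x)))| := by congr 1; ring
    _ = 4 * (2 * ((1 - x) * (1 + x))) * (2 * (1 + 2 * x * (1 - x))) :=
      abs_of_nonneg (by positivity)
    _ ≤ (2 * ((1 - x) * (1 + x)) + 2 * (1 + 2 * x * (1 - x))) ^ 2 := four_mul_le_sq_add _ _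
    _ ≤ (14 / 3) ^ 2 :=
      pow_le_pow_left₀ (by positivity) (by linarith [sq_nonneg (x - 1 / 3)]) 2
    _ ≤ 22 := by norm_num

theorem abs_Psi_coeff_two_le (hx0 : 0 ≤ x) (hx1 : x ≤ 1) :
    |20 + 14 * x - 82 * x ^ 2 + 76 * x ^ 3 - 12 * x ^ 4| ≤ 23 := by
  have : 0 ≤ 1 - x := sub_nonneg.2 hx1
  have lower_gap_nonneg :
      0 ≤ 30 + (1 - x) * (13 + 2 * x) + x * (8 * x - 5) ^ 2 + 12 * x ^ 3 * (1 - x) := by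
    positivity
  have upper_gap_nonneg :
      0 ≤ 3 * (1 - 7 / 3 * x) ^ 2 + x ^ 2 * ((1 - x) * (52 + 12 * (1 - x)) + 5 / 3) := by
    positivity
  exact abs_le.2 ⟨by linarith, by linarith⟩

theorem abs_Psi_coeff_three_le (hx0 : 0 ≤ x) (hx1 : x ≤ 1) :
    |-4 - 10 * x + 8 * x ^ 2 + 10 * x ^ 3 - 4 * x ^ 4| ≤ 8 := by
  have : 0 ≤ 1 - x := sub_nonneg.2 hx1
  calc
    _ = |-(4 * ((1 - x) * (1 + x)) * (1 + 3 / 2 * x + x * (1 - x)))| := by congr 1; ring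
    _ = 4 * ((1 - x) * (1 + x)) * (1 + 3 / 2 * x + x * (1 - x)) := by
      rw [abs_neg, abs_of_nonneg (by positivity)]
    _ ≤ ((1 - x) * (1 + x) + (1 + 3 / 2 * x + x * (1 - x))) ^ 2 := four_mul_le_sq_add _ _
    _ ≤ (89 / 32) ^ 2 :=
      pow_le_pow_left₀ (by positivity) (by linarith [sq_nonneg (x - 5 / 8)]) 2
    _ ≤ 8 := by norm_num

theorem abs_Psi_coeff_four_le (hx0 : 0 ≤ x) (hx1 : x ≤ 1) :
    |5 / 4 - (13 / 2) * x + (29 / 4) * x ^ 2 - 7 * x ^ 3 + x ^ 4| ≤ 4 := by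
  have : 0 ≤ 1 - x := sub_nonneg.2 hx1
  have lower_gap_nonneg :
      0 ≤ (1 - x) * (4 + 5 / 4 * (1 - x) + 5 * x ^ 2 + x ^ 2 * (1 - x)) := by
    positivity
  have upper_gap_nonneg :
      0 ≤ 2 + 3 / 4 * ((1 - x) * (1 + x)) + 13 / 2 * x * (1 - x) + 6 * x ^ 3 +
        x ^ 3 * (1 - x) := by
    positivity
  exact abs_le.2 ⟨by linarith, by linarith⟩

theorem Psi_neg (hc : |c| ≤ 1) (hx0 : 0 ≤ x) (hx1 : x ≤ 1) : Psi c x < 0 := by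
  have hzero := Psi_coeff_zero_le hx0 hx1
  have hone := mul_pow_le_of_abs_le (abs_Psi_coeff_one_le hx0 hx1) hc 1
  have htwo := mul_pow_le_of_abs_le (abs_Psi_coeff_two_le hx0 hx1) hc 2
  have hthree := mul_pow_le_of_abs_le (abs_Psi_coeff_three_le hx0 hx1) hc 3
  have hfour := mul_pow_le_of_abs_le (abs_Psi_coeff_four_le hx0 hx1) hc 4
  rw [pow_one] at hone
  unfold Psi
  linarith

theorem Phi_neg_general (hc : |c| ≤ 1) (hx0 : 1 / 4 ≤ x) (hx1 : x < 1) : Phi c x < 0 := by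
  have hx : 0 < x := by linarith
  have : 0 < 1 - x := sub_pos.2 hx1
  have : 0 ≤ 4 * x - 1 := by linarith
  have hPsi : Psi c x < 0 := Psi_neg hc hx.le hx1.le
  rw [Phi_eq_add_sq_mul_Psi]
  rcases (le_of_abs_le hc).lt_or_eq with hc1 | rfl
  · have : 0 < 1 - c := sub_pos.2 hc1
    have linear_part_neg :
        -(32 * x * (1 - x) * ((4 * x - 1) * (1 - x) + (1 + x) * (1 + 2 * x) * (1 - c))) < 0 :=
      neg_neg_of_pos (by positivity)
    exact add_neg_of_neg_of_nonpos linear_part_neg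
      (mul_nonpos_of_nonneg_of_nonpos (sq_nonneg c) hPsi.le)
  · have linear_part_nonpos : -(32 * x * (1 - x) * ((4 * x - 1) * (1 - x))) ≤ 0 :=
      neg_nonpos_of_nonneg (by positivity)
    linarith

end

theorem Phi_neg (c x : ℝ) (hc0 : 0 ≤ c) (hc1 : c ≤ 87137 / 250000)
    (hx0 : 1 / 4 ≤ x) (hx1 : x < 1) :
    (-256 * x ^ 2 + 320 * x ^ 3 - 64 * x ^ 4) +
      (32 * x + 64 * x ^ 2 - 32 * x ^ 3 - 64 * x ^ 4) * c +
      (-160 + 48 * x + 276 * x ^ 2 - 272 * x ^ 3 + 48 * x ^ 4) * c ^ 2 +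
      (16 + 32 * x - 48 * x ^ 2 - 32 * x ^ 3 + 32 * x ^ 4) * c ^ 3 +
      (20 + 14 * x - 82 * x ^ 2 + 76 * x ^ 3 - 12 * x ^ 4) * c ^ 4 +
      (-4 - 10 * x + 8 * x ^ 2 + 10 * x ^ 3 - 4 * x ^ 4) * c ^ 5 +
      (5 / 4 - (13 / 2) * x + (29 / 4) * x ^ 2 - 7 * x ^ 3 + x ^ 4) * c ^ 6 < 0 :=
  Phi_neg_general (abs_le.2 ⟨by linarith, by linarith⟩) hx0 hx1
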